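/- Let E be a 2-stage stochastic matrix with n blocks and block dimensions r, s, t, and let D be a set of columns of E with |D| = nt such that the square submatrix of E formed by the columns in D is invertible. For each block i ∈ [n], let D_i be the set of local columns of block i contained in D. Then the number of blocks i ∈ [n] with D_i ≠ ∅ and |D_i| < t is at most r. -/

import Mathlib

/-!
A nonzero determinant has a nonzero term in its Leibniz expansion, i.e. a bijection between the
rows and the chosen columns that matches each row with a column having a nonzero entry in it.
By the block structure, a local column matched with a row of block `i` belongs to block `i`, so at
least `t - |D_i|` rows of block `i` are matched with global columns. Summing over the blocks,
`∑ i, (t - |D_i|)⁺ ≤ r`, and every block with `|D_i| < t` contributes at least `1` to the sum.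
-/

open Matrix

section

open Finset

variable {m n ι κ γ ν R S : Type*}

/-- A 2-stage stochastic matrix: the rows are pairs (block, row of the block), the columns are
either global (`γ`) or pairs (block, local column of the block), and a local column vanishes outside
the rows of its block. -/
def IsTwoStage [Zero R] (M : Matrix (ι × κ) (γ ⊕ ι × ν) R) : Prop :=
  ∀ (i : ι) (k : κ) (j : ι) (l : ν), j ≠ i → M (i, k) (Sum.inr (j, l)) = 0

/-- The set `D_i` of local columns of block `i` that belong to a set `D` of columns. -/
def localColumns [DecidableEq ι] [DecidableEq γ] [Fintype ν] [DecidableEq ν]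
    (D : Finset (γ ⊕ ι × ν)) (i : ι) : Finset ν :=
  {l | Sum.inr (i, l) ∈ D}

theorem IsTwoStage.map [Zero R] [Zero S] {M : Matrix (ι × κ) (γ ⊕ ι × ν) R} (hM : IsTwoStage M)
    {f : R → S} (hf : f 0 = 0) : IsTwoStage (M.map f) :=
  fun i k j l hji => by rw [Matrix.map_apply, hM i k j l hji, hf]

theorem IsTwoStage.fst_eq_of_apply_inr_ne_zero [Zero R] {M : Matrix (ι × κ) (γ ⊕ ι × ν) R}
    (hM : IsTwoStage M) {p : ι × κ} {q : ι × ν} (h : M p (Sum.inr q) ≠ 0) : q.1 = p.1 :=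
  not_imp_comm.1 (hM p.1 p.2 q.1 q.2) h

theorem exists_perm_forall_apply_ne_zero_of_det_ne_zero [Fintype m] [DecidableEq m] [CommRing R]
    {A : Matrix m m R} (hA : A.det ≠ 0) : ∃ σ : Equiv.Perm m, ∀ i, A (σ i) i ≠ 0 := by
  rw [Matrix.det_apply] at hA
  obtain ⟨σ, -, hσ⟩ := exists_ne_zero_of_sum_ne_zero hA
  refine ⟨σ, fun i hi => hσ ?_⟩
  have hprod : ∏ j, A (σ j) j = 0 := prod_eq_zero (mem_univ i) hi
  rw [hprod, smul_zero]

theorem exists_equiv_forall_apply_ne_zero_of_det_submatrix_ne_zero [Fintype m] [DecidableEq m]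
    [CommRing R] {M : Matrix m n R} {D : Finset n} {e : m ≃ D}
    (he : (M.submatrix id fun p => (e p : n)).det ≠ 0) : ∃ f : m ≃ D, ∀ p, M p (f p) ≠ 0 := by
  obtain ⟨σ, hσ⟩ := exists_perm_forall_apply_ne_zero_of_det_ne_zero he
  exact ⟨σ.symm.trans e, fun p => by simpa using hσ (σ.symm p)⟩

theorem card_filter_isLeft_le_of_injective [Fintype m] [Fintype γ] {f : m → γ ⊕ n}
    (hf : f.Injective) : #{p | (f p).isLeft} ≤ Fintype.card γ := by
  have hmaps : Set.MapsTo f ({p | (f p).isLeft} : Finset m)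
      ((univ : Finset γ).map .inl : Finset (γ ⊕ n)) := fun p hp => by
    obtain ⟨g, hg⟩ := Sum.isLeft_iff.1 (mem_filter.1 hp).2
    simp [hg]
  simpa using card_le_card_of_injOn f hmaps hf.injOn

theorem card_le_card_localColumns_add_card_filter_isLeft [DecidableEq ι] [Fintype κ]
    [DecidableEq γ] [Fintype ν] [DecidableEq ν] {D : Finset (γ ⊕ ι × ν)} {i : ι}
    {f : κ → γ ⊕ ι × ν} (hf : f.Injective) (hmem : ∀ k, f k ∈ D)
    (hblock : ∀ k q, f k = Sum.inr q → q.1 = i) :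
    Fintype.card κ ≤ #(localColumns D i) + #{k | (f k).isLeft} := by
  have hmaps : Set.MapsTo f ({k | ¬ (f k).isLeft} : Finset κ)
      ((localColumns D i).image fun l => Sum.inr (i, l) : Finset (γ ⊕ ι × ν)) := fun k hk => by
    obtain ⟨⟨j, l⟩, hq⟩ := Sum.isRight_iff.1 (Sum.not_isLeft.1 (mem_filter.1 hk).2)
    obtain rfl : j = i := hblock k (j, l) hq
    exact mem_image.2 ⟨l, mem_filter.2 ⟨mem_univ l, hq ▸ hmem k⟩, hq.symm⟩
  have hlocal : #{k | ¬ (f k).isLeft} ≤ #(localColumns D i) :=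
    (card_le_card_of_injOn f hmaps hf.injOn).trans card_image_le
  have hsplit := card_filter_add_card_filter_not (s := (univ : Finset κ)) fun k => (f k).isLeft
  rw [card_univ] at hsplit
  omega

theorem card_filter_le_sum_tsub_of_lt {s : Finset ι} {p : ι → Prop} [DecidablePred p] {f g : ι → ℕ}
    (h : ∀ i ∈ s, p i → f i < g i) : #{i ∈ s | p i} ≤ ∑ i ∈ s, (g i - f i) := by
  rw [card_filter]
  refine sum_le_sum fun i hi => ?_
  split_ifs with hp
  · exact Nat.sub_pos_of_lt (h i hi hp)
  · exact Nat.zero_le _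

theorem twoStage_portrait_blocks_bound_general [Fintype ι] [DecidableEq ι] [Fintype κ]
    [DecidableEq κ] [Fintype γ] [DecidableEq γ] [Fintype ν] [DecidableEq ν] [CommRing R]
    {M : Matrix (ι × κ) (γ ⊕ ι × ν) R} (hM : IsTwoStage M) {D : Finset (γ ⊕ ι × ν)}
    {e : ι × κ ≃ D} (he : (M.submatrix id fun p => (e p : γ ⊕ ι × ν)).det ≠ 0) :
    ∑ i, (Fintype.card κ - #(localColumns D i)) ≤ Fintype.card γ := by
  obtain ⟨f, hf⟩ := exists_equiv_forall_apply_ne_zero_of_det_submatrix_ne_zero he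
  have hinj : Function.Injective fun p => (f p : γ ⊕ ι × ν) :=
    Subtype.val_injective.comp f.injective
  have hblock : ∀ i k q, (f (i, k) : γ ⊕ ι × ν) = Sum.inr q → q.1 = i := fun i k q hq =>
    hM.fst_eq_of_apply_inr_ne_zero (hq ▸ hf (i, k))
  calc ∑ i, (Fintype.card κ - #(localColumns D i))
      ≤ ∑ i, #{k | (f (i, k) : γ ⊕ ι × ν).isLeft} := sum_le_sum fun i _ =>
        tsub_le_iff_left.2 <| card_le_card_localColumns_add_card_filter_isLeft
          (hinj.comp (Prod.mk_right_injective i)) (fun k => (f (i, k)).2) (hblock i)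
    _ = #{p | (f p : γ ⊕ ι × ν).isLeft} := by simp only [card_filter, Fintype.sum_prod_type]
    _ ≤ Fintype.card γ := card_filter_isLeft_le_of_injective hinj

end

/-- if `D` is a set of `n·t` columns of a 2-stage stochastic matrix whose
square submatrix is invertible, then at most `r` blocks are portrait, i.e., at most `r`
blocks `i` satisfy `D_i ≠ ∅` and `|D_i| < t`. -/
theorem twoStage_portrait_blocks_bound (n r s t : ℕ)
    (E : Matrix (Fin n × Fin t) (Fin r ⊕ Fin n × Fin s) ℤ)
    (hE : ∀ (i : Fin n) (k : Fin t) (j : Fin n) (l : Fin s),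
      j ≠ i → E (i, k) (Sum.inr (j, l)) = 0)
    (D : Finset (Fin r ⊕ Fin n × Fin s)) (hcard : D.card = n * t)
    (hinv : ∃ e : (Fin n × Fin t) ≃ {c // c ∈ D},
      ((E.map (Int.cast : ℤ → ℝ)).submatrix id fun p => ((e p : {c // c ∈ D}) : Fin r ⊕ Fin n × Fin s)).det ≠ 0) :
    (Finset.univ.filter fun i : Fin n =>
      (Finset.univ.filter fun l : Fin s => Sum.inr (i, l) ∈ D).Nonempty ∧
      (Finset.univ.filter fun l : Fin s => Sum.inr (i, l) ∈ D).card < t).card ≤ r := by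
  obtain ⟨e, he⟩ := hinv
  refine (card_filter_le_sum_tsub_of_lt fun i _ hi => hi.2).trans ?_
  simpa only [localColumns, Fintype.card_fin] using
    twoStage_portrait_blocks_bound_general (IsTwoStage.map hE Int.cast_zero) he
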